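/- Consider a pairwise separable convex program whose objective F is (λ,w)-scaled diagonally dominant, with initial messages satisfying the initialization assumption. Fix r ∈ V and t ≥ 0, and let 𝒯 = (𝒱,ℰ), σ, and F_𝒯 be the associated computation tree rooted at r with depth t and its objective. Then F_𝒯 is (λ, w∘σ)-scaled diagonally dominant: for each i ∈ 𝒱 and all x ∈ ℝ^𝒱, Σ_{u∈𝒱∖{i}} w_{σ_u} |∂²F_𝒯/∂x_i∂x_u(x)| ≤ λ w_{σ_i} ∂²F_𝒯/∂x_i²(x). -/

import Mathlib

open Filter Finset

/-- Partial derivative of `F : (ι → ℝ) → ℝ` in coordinate `i` at `x`. -/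
noncomputable def pd {ι : Type*} [DecidableEq ι] (F : (ι → ℝ) → ℝ) (i : ι) (x : ι → ℝ) : ℝ :=
  deriv (fun y => F (Function.update x i y)) (x i)

/-- Second partial derivative `∂²F/∂x_i∂x_j` of `F : (ι → ℝ) → ℝ` at `x`. -/
noncomputable def pd2 {ι : Type*} [DecidableEq ι] (F : (ι → ℝ) → ℝ) (i j : ι) (x : ι → ℝ) : ℝ :=
  pd (pd F j) i x

/-- Vertices of the depth-`t` computation tree: a vertex is a walk from the root,
encoded by its length `k ≤ t` and the sequence of vertices visited after the root. -/
abbrev TVert (V : Type*) (t : ℕ) : Type _ := (k : Fin (t + 1)) × (Fin k.1 → V)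

/-- The vertex of the original graph at position `m` along the walk `a`
(position `0` is the root `r`). -/
def walkAt {V : Type*} {t : ℕ} (r : V) (a : TVert V t) (m : ℕ) : V :=
  if h : 1 ≤ m ∧ m ≤ a.1.1 then a.2 ⟨m - 1, by omega⟩ else r

/-- The label `σ` of a computation-tree vertex: the final vertex of the walk. -/
def sigTV {V : Type*} {t : ℕ} (r : V) (a : TVert V t) : V := walkAt r a a.1.1

/-- The parent of a computation-tree vertex (the root is its own parent). -/
def parTV {V : Type*} {t : ℕ} (a : TVert V t) : TVert V t :=
  ⟨⟨a.1.1 - 1, by have := a.1.isLt; omega⟩,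
    fun m => a.2 ⟨m.1, lt_of_lt_of_le m.isLt (Nat.sub_le _ _)⟩⟩

/-- The set of vertices of the computation tree rooted at `r` of depth `t`:
non-backtracking walks in `G` starting at `r` of length at most `t`.  (The two
conditions say that consecutive vertices are adjacent and that
`walkAt a m ≠ walkAt a (m+2)` whenever `m + 2 ≤ length`.) -/
def validSet {V : Type*} [Fintype V] [DecidableEq V] (G : SimpleGraph V) [DecidableRel G.Adj]
    (r : V) (t : ℕ) : Finset (TVert V t) :=
  univ.filter (fun a =>
    (∀ m, m < a.1.1 → G.Adj (walkAt r a m) (walkAt r a (m + 1))) ∧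
    (∀ m, m < a.1.1 - 1 → walkAt r a m ≠ walkAt r a (m + 2)))

/-!
Two facts make the theorem true. First, row `i` of the Hessian of a pairwise objective depends
only on the edges at `i` and the values at `i` and its neighbors. Second, the map sending a walk
to its final vertex is a graph homomorphism, injective on the neighbors of each tree vertex `a`.
Hence a configuration `x` on the tree can be transported to a configuration `y` on the graph that
agrees with `x` around `a`, and row `a` of the tree Hessian at `x` matches row `σ a` of the
original Hessian at `y`, edge by edge. Only at the leaves of full depth does the tree miss some
neighbors of `σ a`: there the off-diagonal sum merely loses terms, while on the diagonal the
initial messages supply at least the curvature of the missing edges once `y` is set to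
`z_{u → σ a}` at each missing neighbor `u`.
-/

lemma deriv_deriv_add_sum {κ : Type*} {s : Finset κ} {u : ℝ → ℝ} {v : κ → ℝ → ℝ}
    (hu : ContDiff ℝ 2 u) (hv : ∀ k ∈ s, ContDiff ℝ 2 (v k)) (y : ℝ) :
    deriv (deriv fun y => u y + ∑ k ∈ s, v k y) y =
      deriv (deriv u) y + ∑ k ∈ s, deriv (deriv (v k)) y := by
  have h2 : ∀ h : ℝ → ℝ, deriv (deriv h) = iteratedDeriv 2 h := fun h => by
    rw [iteratedDeriv_succ, iteratedDeriv_one]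
  simp only [h2]
  rw [← iteratedDeriv_fun_sum fun k hk => (hv k hk).contDiffAt]
  exact iteratedDeriv_add hu.contDiffAt (ContDiff.sum hv).contDiffAt

section PairwiseObjective

variable {ι : Type*} [Fintype ι] (H : SimpleGraph ι) [DecidableRel H.Adj]
  (φ : ι → ℝ → ℝ) (ψ : ι → ι → ℝ → ℝ → ℝ)

/-- The pairwise separable objective on the graph `H` with vertex factors `φ` and edge factors `ψ`.
The edge sum runs over ordered pairs, so for symmetric `ψ` the factor `1 / 2` makes every edge
count once. -/
noncomputable def pairwiseObjective (x : ι → ℝ) : ℝ :=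
  ∑ i, φ i (x i) + (1 / 2) * ∑ i, ∑ j ∈ H.neighborFinset i, ψ i j (x i) (x j)

/-- The terms of the pairwise objective that involve coordinate `i`, as a function of the value `s`
of that coordinate, the other coordinates being frozen at `x`. -/
noncomputable def localObjective (x : ι → ℝ) (i : ι) (s : ℝ) : ℝ :=
  φ i s + ∑ j ∈ H.neighborFinset i, ψ i j s (x j)

/-- The mixed second derivative `∂²ψ/∂s∂t` of a function of two real variables, with the derivative
in the second variable taken first, as in `pd2`. -/
noncomputable def mixedDeriv (ψ : ℝ → ℝ → ℝ) (s t : ℝ) : ℝ :=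
  deriv (fun s' => deriv (ψ s') t) s

/-- Scaled diagonal dominance with constant `lam` and weights `w` of row `i` of the Hessian of `F`
at the point `x`. -/
def IsScaledDiagDominantAt [DecidableEq ι] (lam : ℝ) (w : ι → ℝ) (F : (ι → ℝ) → ℝ) (i : ι)
    (x : ι → ℝ) : Prop :=
  ∑ j ∈ univ.erase i, w j * |pd2 F i j x| ≤ lam * w i * pd2 F i i x

variable {H φ ψ} [DecidableEq ι]

lemma localObjective_update_of_not_adj {i j : ι} (hij : ¬ H.Adj j i) (x : ι → ℝ) (s : ℝ) :
    localObjective H φ ψ (Function.update x i s) j = localObjective H φ ψ x j := by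
  funext t
  refine congrArg (φ j t + ·) (sum_congr rfl fun k hk => ?_)
  rw [Function.update_of_ne]
  rintro rfl
  exact hij ((H.mem_neighborFinset _ _).1 hk)

lemma sum_edgeFactor_update_sub
    (hψ : ∀ i j, H.Adj i j → ∀ s t, ψ i j s t = ψ j i t s) (x : ι → ℝ) (i : ι) (s : ℝ) (k : ι) :
    ∑ l ∈ H.neighborFinset k, ψ k l (Function.update x i s k) (Function.update x i s l) -
        ∑ l ∈ H.neighborFinset k, ψ k l (x k) (x l) =
      (if k = i then ∑ l ∈ H.neighborFinset i, (ψ i l s (x l) - ψ i l (x i) (x l)) else 0) +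
        if k ∈ H.neighborFinset i then ψ i k s (x k) - ψ i k (x i) (x k) else 0 := by
  rw [← sum_sub_distrib]
  rcases eq_or_ne k i with rfl | hki
  · simp only [Function.update_self, if_true, H.mem_neighborFinset, H.irrefl, if_false, add_zero]
    refine sum_congr rfl fun l hl => ?_
    rw [Function.update_of_ne ((H.mem_neighborFinset _ _).1 hl).ne']
  · have hterm : ∀ l ∈ H.neighborFinset k,
        ψ k l (Function.update x i s k) (Function.update x i s l) - ψ k l (x k) (x l) =
          if l = i then ψ i k s (x k) - ψ i k (x i) (x k) else 0 := by
      intro l hl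
      rw [Function.update_of_ne hki]
      split_ifs with hli
      · subst hli
        have hkl := (H.mem_neighborFinset _ _).1 hl
        rw [Function.update_self, hψ k l hkl, hψ k l hkl]
      · rw [Function.update_of_ne hli, sub_self]
    rw [sum_congr rfl hterm, if_neg hki, zero_add, sum_ite_eq']
    simp only [H.mem_neighborFinset, H.adj_comm]

lemma pairwiseObjective_update
    (hψ : ∀ i j, H.Adj i j → ∀ s t, ψ i j s t = ψ j i t s) (x : ι → ℝ) (i : ι) (s : ℝ) :
    pairwiseObjective H φ ψ (Function.update x i s) = pairwiseObjective H φ ψ x +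
      (localObjective H φ ψ x i s - localObjective H φ ψ x i (x i)) := by
  have hvertex : ∑ k, φ k (Function.update x i s k) - ∑ k, φ k (x k) = φ i s - φ i (x i) := by
    rw [← sum_sub_distrib, Fintype.sum_eq_single i fun k hk => by
      rw [Function.update_of_ne hk, sub_self], Function.update_self]
  have hedge := sum_congr (rfl : (univ : Finset ι) = univ)
    fun k _ => sum_edgeFactor_update_sub hψ x i s k
  rw [sum_sub_distrib, sum_add_distrib, Fintype.sum_ite_eq', Fintype.sum_ite_mem,
    sum_sub_distrib] at hedge
  simp only [pairwiseObjective, localObjective]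
  linear_combination hvertex + (1 / 2) * hedge

lemma pd_pairwiseObjective
    (hψ : ∀ i j, H.Adj i j → ∀ s t, ψ i j s t = ψ j i t s) (i : ι) :
    pd (pairwiseObjective H φ ψ) i = fun x => deriv (localObjective H φ ψ x i) (x i) := by
  funext x
  simp only [pd, pairwiseObjective_update hψ, deriv_const_add, deriv_sub_const]

lemma pd2_pairwiseObjective_of_not_adj
    (hψ : ∀ i j, H.Adj i j → ∀ s t, ψ i j s t = ψ j i t s) {i j : ι} (hne : j ≠ i)
    (hij : ¬ H.Adj i j) (x : ι → ℝ) : pd2 (pairwiseObjective H φ ψ) i j x = 0 := by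
  rw [H.adj_comm] at hij
  rw [pd2, pd_pairwiseObjective hψ]
  simp only [pd, localObjective_update_of_not_adj hij, Function.update_of_ne hne, deriv_const]

lemma pd2_pairwiseObjective_self
    (hψ : ∀ i j, H.Adj i j → ∀ s t, ψ i j s t = ψ j i t s) {i : ι} (hφ_smooth : ContDiff ℝ 2 (φ i))
    (hψ_smooth : ∀ j, H.Adj i j → ∀ t, ContDiff ℝ 2 fun s => ψ i j s t) (x : ι → ℝ) :
    pd2 (pairwiseObjective H φ ψ) i i x = deriv (deriv (φ i)) (x i) +
      ∑ j ∈ H.neighborFinset i, deriv (deriv fun s => ψ i j s (x j)) (x i) := by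
  rw [pd2, pd_pairwiseObjective hψ]
  simp only [pd, localObjective_update_of_not_adj H.irrefl, Function.update_self]
  exact deriv_deriv_add_sum hφ_smooth
    (fun j hj => hψ_smooth j ((H.mem_neighborFinset _ _).1 hj) (x j)) (x i)

lemma deriv_localObjective_update
    {i j : ι} (hij : H.Adj i j) (hφ_diff : Differentiable ℝ (φ j))
    (hψ_diff : ∀ k, H.Adj j k → ∀ t, Differentiable ℝ fun s => ψ j k s t)
    (x : ι → ℝ) (s t : ℝ) :
    deriv (localObjective H φ ψ (Function.update x i s) j) t =
      deriv (φ j) t + ∑ k ∈ (H.neighborFinset j).erase i, deriv (fun b => ψ j k b (x k)) t +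
        deriv (fun b => ψ j i b s) t := by
  have hi : i ∈ H.neighborFinset j := (H.mem_neighborFinset _ _).2 hij.symm
  have hdiff : ∀ k ∈ H.neighborFinset j,
      DifferentiableAt ℝ (fun b => ψ j k b (Function.update x i s k)) t :=
    fun k hk => hψ_diff k ((H.mem_neighborFinset _ _).1 hk) _ t
  unfold localObjective
  rw [deriv_fun_add (hφ_diff t) (DifferentiableAt.fun_sum hdiff), deriv_fun_sum hdiff,
    ← sum_erase_add _ _ hi, ← add_assoc, Function.update_self]
  congr 2
  exact sum_congr rfl fun k hk => by rw [Function.update_of_ne (ne_of_mem_erase hk)]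

lemma pd2_pairwiseObjective_of_adj
    (hψ : ∀ i j, H.Adj i j → ∀ s t, ψ i j s t = ψ j i t s) {i j : ι} (hij : H.Adj i j)
    (hφ_diff : Differentiable ℝ (φ j))
    (hψ_diff : ∀ k, H.Adj j k → ∀ t, Differentiable ℝ fun s => ψ j k s t) (x : ι → ℝ) :
    pd2 (pairwiseObjective H φ ψ) i j x = mixedDeriv (ψ i j) (x i) (x j) := by
  have hswap : ∀ s, (fun b => ψ j i b s) = ψ i j s := fun s => funext fun b => (hψ i j hij s b).symm
  rw [pd2, pd_pairwiseObjective hψ]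
  simp only [pd, Function.update_of_ne hij.ne', deriv_localObjective_update hij hφ_diff hψ_diff,
    deriv_const_add, hswap, mixedDeriv]

lemma sum_weight_mul_abs_pd2_pairwiseObjective
    (hψ : ∀ i j, H.Adj i j → ∀ s t, ψ i j s t = ψ j i t s)
    (hφ_diff : ∀ i, Differentiable ℝ (φ i))
    (hψ_diff : ∀ i j, H.Adj i j → ∀ t, Differentiable ℝ fun s => ψ i j s t)
    (w : ι → ℝ) (i : ι) (x : ι → ℝ) :
    ∑ j ∈ univ.erase i, w j * |pd2 (pairwiseObjective H φ ψ) i j x| =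
      ∑ j ∈ H.neighborFinset i, w j * |mixedDeriv (ψ i j) (x i) (x j)| := by
  symm
  refine sum_subset_zero_on_sdiff ?_ ?_ ?_
  · intro j hj
    simpa using ((H.mem_neighborFinset _ _).1 hj).ne'
  · intro j hj
    simp only [Finset.mem_sdiff, mem_erase, mem_univ, and_true, H.mem_neighborFinset] at hj
    rw [pd2_pairwiseObjective_of_not_adj hψ hj.1 hj.2, abs_zero, mul_zero]
  · intro j hj
    rw [pd2_pairwiseObjective_of_adj hψ ((H.mem_neighborFinset _ _).1 hj) (hφ_diff j) (hψ_diff j)]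

end PairwiseObjective

section Lift

variable {V ι : Type*} [Fintype V] [DecidableEq V] [Fintype ι]
  {G : SimpleGraph V} [DecidableRel G.Adj] {H : SimpleGraph ι} [DecidableRel H.Adj]

/-- The neighbors of `σ a` that are not the image of a neighbor of `a`; empty when the homomorphism
`σ` is a covering at `a`. -/
def uncoveredNeighbors (σ : H →g G) (a : ι) : Finset V :=
  G.neighborFinset (σ a) \ (H.neighborFinset a).image σ

lemma adj_of_mem_uncoveredNeighbors {σ : H →g G} {a : ι} {v : V}
    (hv : v ∈ uncoveredNeighbors σ a) : G.Adj v (σ a) :=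
  ((G.mem_neighborFinset _ _).1 (Finset.mem_sdiff.1 hv).1).symm

lemma image_neighborFinset_subset (σ : H →g G) (a : ι) :
    (H.neighborFinset a).image σ ⊆ G.neighborFinset (σ a) := by
  simp only [image_subset_iff, SimpleGraph.mem_neighborFinset]
  exact fun _ => σ.map_adj

lemma exists_extension_of_injOn {α β γ : Type*} {s : Set α} {σ : α → β} (hσ : Set.InjOn σ s)
    (x : α → γ) (z : β → γ) :
    ∃ y : β → γ, (∀ a ∈ s, y (σ a) = x a) ∧ ∀ b ∉ σ '' s, y b = z b := by
  refine ⟨Function.extend (s.domRestrict σ) (s.domRestrict x) z, fun a ha => ?_, fun b hb => ?_⟩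
  · exact hσ.injective.extend_apply (s.domRestrict x) z ⟨a, ha⟩
  · exact Function.extend_apply' _ _ _ fun ⟨a, ha⟩ => hb ⟨a, a.2, ha⟩

lemma exists_extension_of_injOn_neighborSet {α : Type*} (σ : H →g G) {a : ι}
    (hσ : Set.InjOn σ (H.neighborSet a)) (x : ι → α) (z : V → α) :
    ∃ y : V → α, y (σ a) = x a ∧ (∀ u ∈ H.neighborFinset a, y (σ u) = x u) ∧
      ∀ v ∈ uncoveredNeighbors σ a, y v = z v := by
  have hinj : Set.InjOn σ (insert a (H.neighborSet a)) := by
    rw [Set.injOn_insert H.notMem_neighborSet_self]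
    exact ⟨hσ, fun ⟨u, hu, hua⟩ => (σ.map_adj hu).ne hua.symm⟩
  obtain ⟨y, hy, hyz⟩ := exists_extension_of_injOn hinj x z
  refine ⟨y, hy a (Set.mem_insert _ _), fun u hu => ?_, fun v hv => hyz v ?_⟩
  · exact hy u (Set.mem_insert_of_mem _ ((H.mem_neighborFinset _ _).1 hu))
  · simp only [uncoveredNeighbors, Finset.mem_sdiff, SimpleGraph.mem_neighborFinset,
      mem_image] at hv
    rintro ⟨u, rfl | hu, rfl⟩
    · exact G.irrefl hv.1
    · exact hv.2 ⟨u, hu, rfl⟩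

theorem IsScaledDiagDominantAt.lift [DecidableEq ι] {f : V → ℝ → ℝ} {g : V → V → ℝ → ℝ → ℝ}
    (hf_smooth : ∀ v, ContDiff ℝ 2 (f v))
    (hg_smooth : ∀ u v, G.Adj u v → ∀ t, ContDiff ℝ 2 fun s => g u v s t)
    (hg_symm : ∀ u v, G.Adj u v → ∀ s t, g u v s t = g v u t s)
    {φ : ι → ℝ → ℝ} (hφ_smooth : ∀ b, ContDiff ℝ 2 (φ b))
    {lam : ℝ} {w : V → ℝ} (hlam : 0 ≤ lam) (hw : ∀ v, 0 ≤ w v)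
    (σ : H →g G) {a : ι} (hσ : Set.InjOn σ (H.neighborSet a)) {x : ι → ℝ} {z : V → ℝ}
    (hφ : deriv (deriv (f (σ a))) (x a) + ∑ v ∈ uncoveredNeighbors σ a,
      deriv (deriv fun s => g (σ a) v s (z v)) (x a) ≤ deriv (deriv (φ a)) (x a))
    (hdd : ∀ y, IsScaledDiagDominantAt lam w (pairwiseObjective G f g) (σ a) y) :
    IsScaledDiagDominantAt lam (w ∘ σ) (pairwiseObjective H φ fun b c => g (σ b) (σ c)) a x := by
  obtain ⟨y, hya, hy, hyz⟩ := exists_extension_of_injOn_neighborSet σ hσ x z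
  have hσ' : Set.InjOn σ (H.neighborFinset a) := by rwa [SimpleGraph.coe_neighborFinset]
  have hg_symm' : ∀ b c, H.Adj b c → ∀ s t, g (σ b) (σ c) s t = g (σ c) (σ b) t s :=
    fun b c hbc => hg_symm _ _ (σ.map_adj hbc)
  have hg_smooth' : ∀ b c, H.Adj b c → ∀ t, ContDiff ℝ 2 fun s => g (σ b) (σ c) s t :=
    fun b c hbc => hg_smooth _ _ (σ.map_adj hbc)
  have hoff : ∑ b ∈ univ.erase a,
        (w ∘ σ) b * |pd2 (pairwiseObjective H φ fun b c => g (σ b) (σ c)) a b x| ≤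
      ∑ v ∈ univ.erase (σ a), w v * |pd2 (pairwiseObjective G f g) (σ a) v y| := by
    rw [sum_weight_mul_abs_pd2_pairwiseObjective hg_symm'
        (fun b => (hφ_smooth b).differentiable two_ne_zero)
        (fun b c hbc t => (hg_smooth' b c hbc t).differentiable two_ne_zero),
      sum_weight_mul_abs_pd2_pairwiseObjective hg_symm
        (fun v => (hf_smooth v).differentiable two_ne_zero)
        (fun u v huv t => (hg_smooth u v huv t).differentiable two_ne_zero)]
    calc ∑ b ∈ H.neighborFinset a, w (σ b) * |mixedDeriv (g (σ a) (σ b)) (x a) (x b)|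
      _ = ∑ v ∈ (H.neighborFinset a).image σ, w v * |mixedDeriv (g (σ a) v) (y (σ a)) (y v)| := by
        rw [sum_image hσ']
        exact sum_congr rfl fun b hb => by rw [hya, hy b hb]
      _ ≤ ∑ v ∈ G.neighborFinset (σ a), w v * |mixedDeriv (g (σ a) v) (y (σ a)) (y v)| :=
        sum_le_sum_of_subset_of_nonneg (image_neighborFinset_subset σ a)
          fun v _ _ => mul_nonneg (hw v) (abs_nonneg _)
  have hdiag : pd2 (pairwiseObjective G f g) (σ a) (σ a) y ≤
      pd2 (pairwiseObjective H φ fun b c => g (σ b) (σ c)) a a x := by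
    rw [pd2_pairwiseObjective_self hg_symm (hf_smooth _) (hg_smooth _),
      pd2_pairwiseObjective_self hg_symm' (hφ_smooth _) (hg_smooth' _),
      ← sum_sdiff (image_neighborFinset_subset σ a), sum_image hσ', ← add_assoc, hya]
    refine add_le_add (le_of_eq_of_le ?_ hφ) (sum_congr rfl fun b hb => by rw [hy b hb]).le
    exact congrArg _ (sum_congr rfl fun v hv => by rw [hyz v hv])
  exact hoff.trans ((hdd y).trans (mul_le_mul_of_nonneg_left hdiag (mul_nonneg hlam (hw _))))

end Lift

section Walks

variable {V : Type*} {t : ℕ}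

lemma walkAt_parTV (r : V) (a : TVert V t) {m : ℕ} (hm : m ≤ a.1.1 - 1) :
    walkAt r (parTV a) m = walkAt r a m :=
  have hiff : 1 ≤ m ∧ m ≤ (parTV a).1.1 ↔ 1 ≤ m ∧ m ≤ a.1.1 :=
    and_congr_right' ⟨fun h => h.trans (Nat.sub_le _ _), fun _ => hm⟩
  dite_congr (propext hiff) (fun _ => rfl) fun _ => rfl

lemma parTV_eq_self {a : TVert V t} (ha : a.1.1 = 0) : parTV a = a := by
  obtain ⟨⟨k, hk⟩, a⟩ := a
  obtain rfl : k = 0 := ha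
  rfl

/-- The walk `a` prolonged by one step to `v`: the child of `a` labelled `v`. -/
def snocTV (a : TVert V t) (ha : a.1.1 < t) (v : V) : TVert V t :=
  ⟨⟨a.1.1 + 1, by omega⟩, Fin.snoc (α := fun _ => V) a.2 v⟩

lemma parTV_snocTV (a : TVert V t) (ha : a.1.1 < t) (v : V) : parTV (snocTV a ha v) = a :=
  Sigma.ext rfl (heq_of_eq (Fin.init_snoc (α := fun _ => V) v a.2))

lemma sigTV_snocTV (r : V) (a : TVert V t) (ha : a.1.1 < t) (v : V) :
    sigTV r (snocTV a ha v) = v := by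
  simp [sigTV, walkAt, snocTV, Fin.snoc]

lemma snocTV_parTV_sigTV (r : V) {c : TVert V t} (hc : 1 ≤ c.1.1) (h : (parTV c).1.1 < t) :
    snocTV (parTV c) h (sigTV r c) = c := by
  obtain ⟨⟨_ | k, hk⟩, c⟩ := c
  · exact absurd hc (Nat.not_succ_le_zero 0)
  · have hsig : sigTV r (⟨⟨k + 1, hk⟩, c⟩ : TVert V t) = c (Fin.last k) :=
      dif_pos ⟨hc, le_rfl⟩
    rw [hsig]
    exact Sigma.ext rfl (heq_of_eq (Fin.snoc_init_self c))

lemma eq_of_parTV_eq_of_sigTV_eq (r : V) {b c : TVert V t} (hb : 1 ≤ b.1.1) (hc : 1 ≤ c.1.1)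
    (hpar : parTV b = parTV c) (hsig : sigTV r b = sigTV r c) : b = c := by
  have hlen : (parTV b).1.1 < t := by
    have := b.1.2
    change b.1.1 - 1 < t
    omega
  rw [← snocTV_parTV_sigTV r hb hlen, ← snocTV_parTV_sigTV r hc (hpar ▸ hlen)]
  simp only [hpar, hsig]

lemma forall_adj_walkAt_iff_parTV (G : SimpleGraph V) (r : V) {c : TVert V t} (hc : 1 ≤ c.1.1) :
    (∀ m < c.1.1, G.Adj (walkAt r c m) (walkAt r c (m + 1))) ↔
      (∀ m < (parTV c).1.1, G.Adj (walkAt r (parTV c) m) (walkAt r (parTV c) (m + 1))) ∧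
        G.Adj (sigTV r (parTV c)) (sigTV r c) := by
  obtain ⟨k, hk⟩ : ∃ k, c.1.1 = k + 1 := ⟨c.1.1 - 1, by omega⟩
  have hpar : (parTV c).1.1 = k := congrArg (· - 1) hk
  have hwalk : ∀ m ≤ k, walkAt r c m = walkAt r (parTV c) m := fun m hm =>
    (walkAt_parTV r c (by omega)).symm
  have hlast : walkAt r c (k + 1) = sigTV r c := by rw [sigTV, hk]
  have hparlast : walkAt r c k = sigTV r (parTV c) := by rw [sigTV, hpar, hwalk k le_rfl]
  rw [hk, hpar, Nat.forall_lt_succ_right, hlast, hparlast]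
  refine and_congr_left' (forall₂_congr fun m hm => ?_)
  rw [hwalk m hm.le, hwalk (m + 1) hm]

lemma forall_walkAt_ne_iff_parTV (r : V) {c : TVert V t} (hc : 1 ≤ c.1.1)
    (hne : sigTV r c ≠ sigTV r (parTV c)) :
    (∀ m < c.1.1 - 1, walkAt r c m ≠ walkAt r c (m + 2)) ↔
      (∀ m < (parTV c).1.1 - 1, walkAt r (parTV c) m ≠ walkAt r (parTV c) (m + 2)) ∧
        sigTV r c ≠ sigTV r (parTV (parTV c)) := by
  obtain ⟨k, hk⟩ : ∃ k, c.1.1 = k + 1 := ⟨c.1.1 - 1, by omega⟩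
  have hpar : (parTV c).1.1 = k := congrArg (· - 1) hk
  have hwalk : ∀ m ≤ k, walkAt r c m = walkAt r (parTV c) m := fun m hm =>
    (walkAt_parTV r c (by omega)).symm
  have hlast : walkAt r c (k + 1) = sigTV r c := by rw [sigTV, hk]
  rw [hk, hpar, Nat.add_sub_cancel]
  rcases k with _ | k
  · rw [parTV_eq_self hpar]
    simp [hne]
  · have hgrand : walkAt r c k = sigTV r (parTV (parTV c)) := by
      have hlen : (parTV (parTV c)).1.1 = k := congrArg (· - 1) hpar
      rw [sigTV, hlen, hwalk k k.le_succ, walkAt_parTV r (parTV c) (by omega)]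
    rw [Nat.forall_lt_succ_right, hlast, hgrand, Nat.add_sub_cancel, ne_comm (a := sigTV r c)]
    refine and_congr_left' (forall₂_congr fun m hm => ?_)
    rw [hwalk m (by omega), hwalk (m + 2) (by omega)]

variable [Fintype V] [DecidableEq V] {G : SimpleGraph V} [DecidableRel G.Adj] {r : V}

lemma mem_validSet_iff_parTV {c : TVert V t} (hc : 1 ≤ c.1.1) :
    c ∈ validSet G r t ↔ parTV c ∈ validSet G r t ∧ G.Adj (sigTV r (parTV c)) (sigTV r c) ∧
      sigTV r c ≠ sigTV r (parTV (parTV c)) := by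
  simp only [validSet, mem_filter, mem_univ, true_and, forall_adj_walkAt_iff_parTV G r hc]
  constructor
  · rintro ⟨⟨hpre, hlink⟩, hback⟩
    have hback := (forall_walkAt_ne_iff_parTV r hc hlink.ne').1 hback
    exact ⟨⟨hpre, hback.1⟩, hlink, hback.2⟩
  · rintro ⟨⟨hpre, hback⟩, hlink, hne⟩
    exact ⟨⟨hpre, hlink⟩, (forall_walkAt_ne_iff_parTV r hc hlink.ne').2 ⟨hback, hne⟩⟩

end Walks

section ComputationTree

variable {V : Type*} [Fintype V] [DecidableEq V] (G : SimpleGraph V) [DecidableRel G.Adj]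
  (r : V) (t : ℕ)

/-- The edges of the computation tree, each one encoded by its lower end, a walk of positive
length. -/
def treeEdges : Finset (TVert V t) :=
  (validSet G r t).filter fun c => 1 ≤ c.1.1

/-- The computation tree rooted at `r` of depth `t` as a graph on all of `TVert V t`; the vertices
outside `validSet G r t` are isolated. -/
def computationTree : SimpleGraph (TVert V t) where
  Adj a b := (b ∈ treeEdges G r t ∧ parTV b = a) ∨ (a ∈ treeEdges G r t ∧ parTV a = b)
  symm := ⟨fun _ _ => Or.symm⟩
  loopless := ⟨by
    suffices h : ∀ a ∈ treeEdges G r t, parTV a ≠ a from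
      fun a ha => ha.elim (fun ha => h a ha.1 ha.2) fun ha => h a ha.1 ha.2
    intro a ha hpar
    have hlen : a.1.1 - 1 = a.1.1 := congrArg (fun b : TVert V t => b.1.1) hpar
    have := (mem_filter.1 ha).2
    omega⟩

instance : DecidableRel (computationTree G r t).Adj := fun a b =>
  inferInstanceAs (Decidable
    ((b ∈ treeEdges G r t ∧ parTV b = a) ∨ (a ∈ treeEdges G r t ∧ parTV a = b)))

variable {G r t}

lemma adj_sigTV_of_mem_treeEdges {c : TVert V t} (hc : c ∈ treeEdges G r t) :
    G.Adj (sigTV r (parTV c)) (sigTV r c) :=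
  have hc := mem_filter.1 hc
  ((mem_validSet_iff_parTV hc.2).1 hc.1).2.1

lemma sigTV_ne_of_mem_treeEdges {c : TVert V t} (hc : c ∈ treeEdges G r t) :
    sigTV r c ≠ sigTV r (parTV (parTV c)) :=
  have hc := mem_filter.1 hc
  ((mem_validSet_iff_parTV hc.2).1 hc.1).2.2

variable (G r t) in
/-- The labelling `σ` of the computation tree as a graph homomorphism to the original graph. -/
def computationTreeHom : computationTree G r t →g G where
  toFun := sigTV r
  map_rel' := by
    rintro a b (⟨hb, rfl⟩ | ⟨ha, rfl⟩)
    · exact adj_sigTV_of_mem_treeEdges hb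
    · exact (adj_sigTV_of_mem_treeEdges ha).symm

lemma injOn_computationTreeHom_neighborSet (a : TVert V t) :
    Set.InjOn (computationTreeHom G r t) ((computationTree G r t).neighborSet a) := by
  rintro b (⟨hb, rfl⟩ | ⟨ha, rfl⟩) c (⟨hc, hca⟩ | ⟨-, rfl⟩) hsig
  · exact eq_of_parTV_eq_of_sigTV_eq r (mem_filter.1 hb).2 (mem_filter.1 hc).2 hca.symm hsig
  · exact absurd hsig (sigTV_ne_of_mem_treeEdges hb)
  · subst hca
    exact absurd hsig.symm (sigTV_ne_of_mem_treeEdges hc)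
  · rfl

lemma adj_parTV_of_adj_sigTV {a : TVert V t} (ha : a ∈ validSet G r t)
    (hadj : G.Adj (sigTV r a) (sigTV r (parTV a))) : (computationTree G r t).Adj a (parTV a) := by
  refine Or.inr ⟨mem_filter.2 ⟨ha, Nat.one_le_iff_ne_zero.2 fun h0 => ?_⟩, rfl⟩
  rw [parTV_eq_self h0] at hadj
  exact G.irrefl hadj

lemma adj_snocTV {a : TVert V t} (ha : a ∈ validSet G r t) (hlt : a.1.1 < t) {v : V}
    (hadj : G.Adj (sigTV r a) v) (hne : v ≠ sigTV r (parTV a)) :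
    (computationTree G r t).Adj a (snocTV a hlt v) := by
  have hpos : 1 ≤ (snocTV a hlt v).1.1 := Nat.le_add_left 1 a.1.1
  refine Or.inl ⟨mem_filter.2 ⟨(mem_validSet_iff_parTV hpos).2 ?_, hpos⟩, parTV_snocTV a hlt v⟩
  rw [parTV_snocTV, sigTV_snocTV]
  exact ⟨ha, hadj, hne⟩

lemma uncoveredNeighbors_of_length_lt {a : TVert V t} (ha : a ∈ validSet G r t)
    (hlt : a.1.1 < t) : uncoveredNeighbors (computationTreeHom G r t) a = ∅ := by
  refine sdiff_eq_empty_iff_subset.2 fun v hv => mem_image.2 ?_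
  have hadj : G.Adj (sigTV r a) v := (SimpleGraph.mem_neighborFinset _ _ _).1 hv
  simp only [SimpleGraph.mem_neighborFinset]
  rcases eq_or_ne v (sigTV r (parTV a)) with rfl | hne
  · exact ⟨parTV a, adj_parTV_of_adj_sigTV ha hadj, rfl⟩
  · exact ⟨snocTV a hlt v, adj_snocTV ha hlt hadj hne, sigTV_snocTV r a hlt v⟩

lemma uncoveredNeighbors_of_length_eq {a : TVert V t} (ha : a ∈ validSet G r t)
    (hlen : a.1.1 = t) : uncoveredNeighbors (computationTreeHom G r t) a =
      (G.neighborFinset (sigTV r a)).erase (sigTV r (parTV a)) := by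
  ext v
  simp only [uncoveredNeighbors, Finset.mem_sdiff, mem_image, mem_erase,
    SimpleGraph.mem_neighborFinset]
  rw [and_comm]
  refine and_congr_left fun hadj => not_congr ⟨?_, ?_⟩
  · rintro ⟨u, ⟨hu, hpar⟩ | ⟨-, rfl⟩, rfl⟩
    · have hu_len : u.1.1 - 1 = a.1.1 := congrArg (fun b : TVert V t => b.1.1) hpar
      have hu_pos := (mem_filter.1 hu).2
      have := u.1.2
      omega
    · rfl
  · rintro rfl
    exact ⟨parTV a, adj_parTV_of_adj_sigTV ha hadj, rfl⟩

lemma sum_neighborFinset_computationTree (a : TVert V t) (h : TVert V t → ℝ) :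
    ∑ b ∈ (computationTree G r t).neighborFinset a, h b =
      ∑ c ∈ treeEdges G r t with parTV c = a, h c +
        if a ∈ treeEdges G r t then h (parTV a) else 0 := by
  have hsplit : (computationTree G r t).neighborFinset a =
      (treeEdges G r t).filter (parTV · = a) ∪
        if a ∈ treeEdges G r t then {parTV a} else ∅ := by
    ext b
    rw [SimpleGraph.mem_neighborFinset, mem_union, mem_filter]
    refine or_congr_right ?_
    split_ifs with ha <;> simp [ha, eq_comm]
  have hdisj : Disjoint ((treeEdges G r t).filter (parTV · = a))
      (if a ∈ treeEdges G r t then {parTV a} else ∅) := by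
    split_ifs with ha
    · rw [disjoint_singleton_right, mem_filter]
      rintro ⟨-, hpar⟩
      exact sigTV_ne_of_mem_treeEdges ha (congrArg (sigTV r) hpar).symm
    · exact disjoint_empty_right _
  rw [hsplit, sum_union hdisj]
  split_ifs <;> simp

lemma sum_sum_neighborFinset_computationTree (ψ : TVert V t → TVert V t → ℝ)
    (hψ : ∀ c ∈ treeEdges G r t, ψ c (parTV c) = ψ (parTV c) c) :
    ∑ a, ∑ b ∈ (computationTree G r t).neighborFinset a, ψ a b =
      2 * ∑ c ∈ treeEdges G r t, ψ (parTV c) c := by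
  have hdown : ∑ a, ∑ c ∈ treeEdges G r t with parTV c = a, ψ a c =
      ∑ c ∈ treeEdges G r t, ψ (parTV c) c := by
    rw [← sum_fiberwise (treeEdges G r t) parTV]
    exact sum_congr rfl fun a _ => sum_congr rfl fun c hc => by rw [(mem_filter.1 hc).2]
  simp only [sum_neighborFinset_computationTree, sum_add_distrib]
  rw [hdown, Fintype.sum_ite_mem, sum_congr rfl hψ, two_mul]

variable (G r t) in
/-- The vertex factors of the computation-tree objective: besides the factor inherited from `f`, a
vertex carries one initial message for each neighbor of `σ a` that the tree does not represent. -/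
noncomputable def treeVertexFactor (f : V → ℝ → ℝ) (J0 : V → V → ℝ → ℝ) (a : TVert V t) : ℝ → ℝ :=
  if a ∈ validSet G r t then
    fun s => f (sigTV r a) s + ∑ u ∈ uncoveredNeighbors (computationTreeHom G r t) a,
      J0 u (sigTV r a) s
  else 0

lemma contDiff_treeVertexFactor {f : V → ℝ → ℝ} {J0 : V → V → ℝ → ℝ}
    (hf : ∀ i, ContDiff ℝ 2 (f i)) (hJ0 : ∀ i j, G.Adj i j → ContDiff ℝ 2 (J0 i j))
    (a : TVert V t) : ContDiff ℝ 2 (treeVertexFactor G r t f J0 a) := by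
  unfold treeVertexFactor
  split_ifs
  · exact (hf _).add (ContDiff.sum fun u hu => hJ0 _ _ (adj_of_mem_uncoveredNeighbors hu))
  · exact contDiff_const

lemma curvature_le_deriv_deriv_treeVertexFactor
    {f : V → ℝ → ℝ} {g : V → V → ℝ → ℝ → ℝ} {J0 : V → V → ℝ → ℝ}
    (hf : ∀ i, ContDiff ℝ 2 (f i)) (hJ0 : ∀ i j, G.Adj i j → ContDiff ℝ 2 (J0 i j))
    (hg_symm : ∀ i j, G.Adj i j → ∀ b c, g i j b c = g j i c b) {z : V → V → ℝ}
    (hz : ∀ i j, G.Adj i j → ∀ s,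
      deriv (deriv fun b => g i j (z i j) b) s ≤ deriv (deriv (J0 i j)) s)
    {a : TVert V t} (ha : a ∈ validSet G r t) (s : ℝ) :
    deriv (deriv (f (sigTV r a))) s + ∑ u ∈ uncoveredNeighbors (computationTreeHom G r t) a,
        deriv (deriv fun b => g (sigTV r a) u b (z u (sigTV r a))) s ≤
      deriv (deriv (treeVertexFactor G r t f J0 a)) s := by
  rw [treeVertexFactor, if_pos ha, deriv_deriv_add_sum (hf _)
    fun u hu => hJ0 u (sigTV r a) (adj_of_mem_uncoveredNeighbors hu)]
  refine add_le_add_right (sum_le_sum fun u hu => ?_) _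
  have hadj : G.Adj u (sigTV r a) := adj_of_mem_uncoveredNeighbors hu
  simpa only [hg_symm _ _ hadj] using hz _ _ hadj s

lemma sum_treeVertexFactor (f : V → ℝ → ℝ) (J0 : V → V → ℝ → ℝ) (x : TVert V t → ℝ) :
    ∑ a, treeVertexFactor G r t f J0 a (x a) =
      ∑ a ∈ validSet G r t, f (sigTV r a) (x a) +
        ∑ a ∈ (validSet G r t).filter (fun a => a.1.1 = t),
          ∑ u ∈ (G.neighborFinset (sigTV r a)).erase (sigTV r (parTV a)),
            J0 u (sigTV r a) (x a) := by
  have hvalid : ∀ a, treeVertexFactor G r t f J0 a (x a) = if a ∈ validSet G r t then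
      f (sigTV r a) (x a) + ∑ u ∈ uncoveredNeighbors (computationTreeHom G r t) a,
        J0 u (sigTV r a) (x a) else 0 := by
    intro a
    unfold treeVertexFactor
    split_ifs <;> rfl
  simp only [hvalid]
  rw [Fintype.sum_ite_mem, sum_add_distrib, sum_filter]
  congr 1
  refine sum_congr rfl fun a ha => ?_
  split_ifs with hlen
  · rw [uncoveredNeighbors_of_length_eq ha hlen]
  · rw [uncoveredNeighbors_of_length_lt ha (by have := a.1.2; omega), sum_empty]

lemma pairwiseObjective_computationTree {f : V → ℝ → ℝ} {g : V → V → ℝ → ℝ → ℝ}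
    (hg_symm : ∀ i j, G.Adj i j → ∀ b c, g i j b c = g j i c b)
    (J0 : V → V → ℝ → ℝ) (x : TVert V t → ℝ) :
    pairwiseObjective (computationTree G r t) (treeVertexFactor G r t f J0)
        (fun a b => g (sigTV r a) (sigTV r b)) x =
      (∑ a ∈ validSet G r t, f (sigTV r a) (x a)) +
      (∑ a ∈ (validSet G r t).filter (fun a => 1 ≤ a.1.1),
        g (sigTV r (parTV a)) (sigTV r a) (x (parTV a)) (x a)) +
      (∑ a ∈ (validSet G r t).filter (fun a => a.1.1 = t),
        ∑ u ∈ (G.neighborFinset (sigTV r a)).erase (sigTV r (parTV a)),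
          J0 u (sigTV r a) (x a)) := by
  have hedge := sum_sum_neighborFinset_computationTree (G := G) (r := r)
    (fun a b => g (sigTV r a) (sigTV r b) (x a) (x b))
    fun c hc => hg_symm _ _ (adj_sigTV_of_mem_treeEdges hc).symm _ _
  rw [pairwiseObjective, sum_treeVertexFactor, hedge, treeEdges]
  ring

end ComputationTree

theorem computationTree_scaled_diagonally_dominant_general
    {V : Type*} [Fintype V] [DecidableEq V]
    (G : SimpleGraph V) [DecidableRel G.Adj]
    (f : V → ℝ → ℝ) (g : V → V → ℝ → ℝ → ℝ)
    (hf_smooth : ∀ i, ContDiff ℝ 2 (f i))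
    (hg_smooth : ∀ i j, G.Adj i j → ContDiff ℝ 2 (fun q : ℝ × ℝ => g i j q.1 q.2))
    (hg_symm : ∀ i j, G.Adj i j → ∀ a b : ℝ, g i j a b = g j i b a)
    (F : (V → ℝ) → ℝ)
    (hF : F = fun x => (∑ i, f i (x i)) +
      (1 / 2) * ∑ i, ∑ j ∈ G.neighborFinset i, g i j (x i) (x j))
    (lam : ℝ) (w : V → ℝ) (hlam : 0 ≤ lam) (hw : ∀ i, 0 ≤ w i)
    (hdd : ∀ (i : V) (x : V → ℝ),
      ∑ j ∈ univ.erase i, w j * |pd2 F i j x| ≤ lam * w i * pd2 F i i x)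
    (J0 : V → V → ℝ → ℝ)
    (hJ0smooth : ∀ i j, G.Adj i j → ContDiff ℝ 2 (J0 i j))
    (hJ0conv : ∀ i j, G.Adj i j → ∃ z : ℝ, ∀ xj : ℝ,
      deriv (deriv (fun b => g i j z b)) xj ≤ deriv (deriv (J0 i j)) xj)
    (r : V) (t : ℕ)
    (FT : (TVert V t → ℝ) → ℝ)
    (hFT : FT = fun x =>
      (∑ a ∈ validSet G r t, f (sigTV r a) (x a)) +
      (∑ a ∈ (validSet G r t).filter (fun a => 1 ≤ a.1.1),
        g (sigTV r (parTV a)) (sigTV r a) (x (parTV a)) (x a)) +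
      (∑ a ∈ (validSet G r t).filter (fun a => a.1.1 = t),
        ∑ u ∈ (G.neighborFinset (sigTV r a)).erase (sigTV r (parTV a)),
          J0 u (sigTV r a) (x a))) :
    ∀ a ∈ validSet G r t, ∀ x : TVert V t → ℝ,
      ∑ u ∈ (validSet G r t).erase a, w (sigTV r u) * |pd2 FT a u x| ≤
        lam * w (sigTV r a) * pd2 FT a a x := by
  intro a ha x
  choose! z hz using hJ0conv
  have hg_slice : ∀ i j, G.Adj i j → ∀ b, ContDiff ℝ 2 fun s => g i j s b := fun i j hij b =>
    (hg_smooth i j hij).comp (contDiff_id.prodMk contDiff_const)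
  obtain rfl : FT = _ :=
    hFT.trans (funext fun x => (pairwiseObjective_computationTree hg_symm J0 x).symm)
  have hlift : IsScaledDiagDominantAt lam (w ∘ sigTV r) _ a x :=
    IsScaledDiagDominantAt.lift hf_smooth hg_slice hg_symm
      (contDiff_treeVertexFactor hf_smooth hJ0smooth) hlam hw (computationTreeHom G r t)
      (injOn_computationTreeHom_neighborSet a)
      (curvature_le_deriv_deriv_treeVertexFactor hf_smooth hJ0smooth hg_symm hz ha (x a))
      fun y => by subst hF; exact hdd _ y
  exact (sum_le_sum_of_subset_of_nonneg (erase_subset_erase a (subset_univ _))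
    fun u _ _ => mul_nonneg (hw _) (abs_nonneg _)).trans hlift

/-- **The computation tree inherits scaled diagonal dominance** (Lemma 1 of
Moallemi–Van Roy).  If the objective `F` of a pairwise separable convex program is
`(λ,w)`-scaled diagonally dominant and the initial messages satisfy the initialization
assumption, then the computation-tree objective `F_𝒯` is `(λ, w ∘ σ)`-scaled diagonally
dominant. -/
theorem computationTree_scaled_diagonally_dominant
    {V : Type*} [Fintype V] [DecidableEq V] [Nonempty V]
    (G : SimpleGraph V) [DecidableRel G.Adj]
    -- the factors of the pairwise separable convex program
    (f : V → ℝ → ℝ) (g : V → V → ℝ → ℝ → ℝ)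
    (hf_sconv : ∀ i, StrictConvexOn ℝ Set.univ (f i))
    (hf_coer : ∀ i, Tendsto (f i) (cocompact ℝ) atTop)
    (hf_smooth : ∀ i, ContDiff ℝ 2 (f i))
    (hg_conv : ∀ i j, G.Adj i j → ConvexOn ℝ Set.univ (fun q : ℝ × ℝ => g i j q.1 q.2))
    (hg_smooth : ∀ i j, G.Adj i j → ContDiff ℝ 2 (fun q : ℝ × ℝ => g i j q.1 q.2))
    (hg_symm : ∀ i j, G.Adj i j → ∀ a b : ℝ, g i j a b = g j i b a)
    -- the objective function
    (F : (V → ℝ) → ℝ)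
    (hF : F = fun x => (∑ i, f i (x i)) +
      (1 / 2) * ∑ i, ∑ j ∈ G.neighborFinset i, g i j (x i) (x j))
    -- `M = min_i inf_x ∂²F/∂x_i²(x) > 0`
    (M : ℝ) (hM : 0 < M) (hMle : ∀ (i : V) (x : V → ℝ), M ≤ pd2 F i i x)
    -- scaled diagonal dominance
    (lam : ℝ) (w : V → ℝ) (hlam0 : 0 < lam) (hlam1 : lam < 1) (hw : ∀ i, 0 < w i)
    (hdd : ∀ (i : V) (x : V → ℝ),
      ∑ j ∈ univ.erase i, w j * |pd2 F i j x| ≤ lam * w i * pd2 F i i x)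
    -- the initial messages and the initialization assumption
    (J0 : V → V → ℝ → ℝ)
    (hJ0smooth : ∀ i j, G.Adj i j → ContDiff ℝ 2 (J0 i j))
    (hJ0conv : ∀ i j, G.Adj i j → ∃ z : ℝ, ∀ xj : ℝ,
      deriv (deriv (fun b => g i j z b)) xj ≤ deriv (deriv (J0 i j)) xj)
    -- the root and depth of the computation tree, and its objective function
    (r : V) (t : ℕ)
    (FT : (TVert V t → ℝ) → ℝ)
    (hFT : FT = fun x =>
      (∑ a ∈ validSet G r t, f (sigTV r a) (x a)) +
      (∑ a ∈ (validSet G r t).filter (fun a => 1 ≤ a.1.1),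
        g (sigTV r (parTV a)) (sigTV r a) (x (parTV a)) (x a)) +
      (∑ a ∈ (validSet G r t).filter (fun a => a.1.1 = t),
        ∑ u ∈ (G.neighborFinset (sigTV r a)).erase (sigTV r (parTV a)),
          J0 u (sigTV r a) (x a))) :
    -- conclusion: `F_𝒯` is `(λ, w ∘ σ)`-scaled diagonally dominant
    ∀ a ∈ validSet G r t, ∀ x : TVert V t → ℝ,
      ∑ u ∈ (validSet G r t).erase a, w (sigTV r u) * |pd2 FT a u x| ≤
        lam * w (sigTV r a) * pd2 FT a a x :=
  computationTree_scaled_diagonally_dominant_general G f g hf_smooth hg_smooth hg_symm F hF lam w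
    hlam0.le (fun i => (hw i).le) hdd J0 hJ0smooth hJ0conv r t FT hFT
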